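/- For any tree $T_m$ on $m$ vertices and any graph $G$ on $n$ vertices with $e$ edges, $t(T_m, G) \geq t(K_2, G)^{m-1}$, where $t(H,G) = \hom(H,G)/n^{|V(H)|}$ is the homomorphism density. Equivalently, $\hom(T_m,G) \cdot n^{m-2} \geq (2e)^{m-1}$. -/

import Mathlib

/-- The number of graph homomorphisms from `H` to `G`. -/
noncomputable def homCount {α β : Type*} (H : SimpleGraph α) (G : SimpleGraph β) : ℕ :=
  Nat.card (H →g G)

/-!
Send a vertex of `T` to a vertex of `G` chosen with probability proportional to its degree, and
extend along the edges of `T` by independent steps of the simple random walk. Degree-biased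
sampling is stationary for the walk, so every vertex of `T` lands on `w` with probability
`deg w / 2e`, and the entropy of this random homomorphism is determined by `|V(T)|` and the degrees
of `G`. It is at most `log hom(T, G)`; convexity of `x log x` on the degrees bounds it from below.
To avoid divisions, probabilities are scaled by `2e`.
-/

theorem sum_mul_log_average_le_sum_mul_log {ι : Type*} [Fintype ι] {x : ι → ℝ}
    (hx : ∀ i, 0 ≤ x i) :
    (∑ i, x i) * Real.log ((∑ i, x i) / Fintype.card ι) ≤ ∑ i, x i * Real.log (x i) := by
  rcases isEmpty_or_nonempty ι with _ | _
  · simp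
  have hn : (0 : ℝ) < Fintype.card ι := mod_cast Fintype.card_pos
  have jensen := Real.convexOn_mul_log.map_sum_le (t := Finset.univ)
    (w := fun _ : ι ↦ (Fintype.card ι : ℝ)⁻¹) (p := x) (fun _ _ ↦ by positivity)
    (by simp [hn.ne']) (fun i _ ↦ hx i)
  simp only [smul_eq_mul, ← Finset.mul_sum] at jensen
  rw [inv_mul_eq_div, mul_comm (_ / _), inv_mul_eq_div, ← mul_div_assoc] at jensen
  rw [mul_comm]
  exact (div_le_div_iff_of_pos_right hn).mp jensen

theorem degree_eq_degree_induce_compl_singleton_add {V : Type*}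
    {T : SimpleGraph V} [T.LocallyFinite] [DecidableRel T.Adj] {v : V}
    [(T.induce {v}ᶜ).LocallyFinite] (x : ({v}ᶜ : Set V)) :
    T.degree x = (T.induce {v}ᶜ).degree x + if T.Adj x v then 1 else 0 := by
  classical
  have nbrs : ((T.induce {v}ᶜ).neighborFinset x).map (.subtype (· ∈ ({v}ᶜ : Set V))) =
      (T.neighborFinset x).erase v := by
    ext y
    simp [and_comm]
  simp only [← SimpleGraph.card_neighborFinset_eq_degree]
  rw [← Finset.card_map (.subtype (· ∈ ({v}ᶜ : Set V))), nbrs]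
  split_ifs with hxv
  · rw [Finset.card_erase_add_one (by simpa using hxv)]
  · rw [Finset.erase_eq_of_notMem (by simpa using hxv), add_zero]

section Homomorphisms

variable {V W : Type*} {T : SimpleGraph V} {G : SimpleGraph W}

/-- A graph with the single vertex `a` may be mapped anywhere, so that its homomorphisms are
identified with the vertices of the target. -/
noncomputable def homEquivOfSubsingleton [Subsingleton V] (a : V) : (T →g G) ≃ W :=
  Equiv.ofBijective (fun φ ↦ φ a)
    ⟨fun φ φ' h ↦ by ext x; rwa [Subsingleton.elim x a],
      fun w ↦ ⟨⟨fun _ ↦ w, fun h ↦ absurd (Subsingleton.elim _ _) h.ne⟩, rfl⟩⟩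

open scoped Classical in
/-- If `v` is a leaf of `T` attached to `u`, a homomorphism from `T` to `G` amounts to a
homomorphism `ψ` on the other vertices together with the image of `v`, a neighbour of `ψ u`. -/
noncomputable def homEquivSigmaNeighborSet {v : V} {u : ({v}ᶜ : Set V)}
    (hvu : ∀ x, T.Adj v x ↔ x = u) :
    (T →g G) ≃ Σ ψ : T.induce {v}ᶜ →g G, G.neighborSet (ψ u) where
  toFun φ := ⟨φ.comp (SimpleGraph.Embedding.induce {v}ᶜ).toHom,
    φ v, φ.map_rel ((hvu u).mpr rfl).symm⟩
  invFun := fun ⟨ψ, w⟩ ↦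
    { toFun x := if h : x = v then w else ψ ⟨x, h⟩
      map_rel' {x y} hxy := by
        by_cases hx : x = v
        · subst hx
          obtain rfl := (hvu y).mp hxy
          simpa [hxy.ne'] using w.2.symm
        · by_cases hy : y = v
          · subst hy
            obtain rfl := (hvu x).mp hxy.symm
            simp only [hx, dite_true, dite_false]
            exact w.2
          · simpa [hx, hy] using ψ.map_rel (a := ⟨x, hx⟩) (b := ⟨y, hy⟩) hxy }
  left_inv φ := by ext x; by_cases hx : x = v <;> simp [hx]
  right_inv := fun ⟨ψ, w⟩ ↦ Sigma.subtype_ext (α := T.induce {v}ᶜ →g G)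
    (p := fun ψ w ↦ w ∈ G.neighborSet (ψ u)) (by ext x; exact dif_neg x.2) (dif_pos rfl)

theorem degree_map_pos [T.LocallyFinite] [G.LocallyFinite] (φ : T →g G) {v : V}
    (hv : 0 < T.degree v) : 0 < G.degree (φ v) := by
  obtain ⟨x, hvx⟩ := (T.degree_pos_iff_exists_adj v).mp hv
  exact (φ.map_rel hvx : G.Adj _ _).degree_pos_left

/-- The weight `∏ v, d (φ v) ^ (1 - deg v)` of a homomorphism `φ : T → G`, where `d` is the degree
in `G`. If `T` is a tree, this is the probability of `φ` under the degree-biased random walk on `G`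
indexed by `T`, multiplied by `∑ w, d w`. The exponent lives in `ℤ`, since it is negative at branch
points. -/
noncomputable def degreeWeight [Fintype V] [T.LocallyFinite] [G.LocallyFinite] (φ : T →g G) : ℝ :=
  ∏ v, (G.degree (φ v) : ℝ) ^ (1 - T.degree v : ℤ)

section LocallyFinite

variable [Fintype V] [T.LocallyFinite] [G.LocallyFinite]

theorem degreeWeight_nonneg (φ : T →g G) : 0 ≤ degreeWeight φ :=
  Finset.prod_nonneg fun _ _ ↦ by positivity

theorem degreeWeight_eq_zero {φ : T →g G} {v : V} (h : G.degree (φ v) = 0) :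
    degreeWeight φ = 0 := by
  have hv : T.degree v = 0 := by
    contrapose! h
    exact (degree_map_pos φ (Nat.pos_of_ne_zero h)).ne'
  exact Finset.prod_eq_zero (Finset.mem_univ v) (by simp [h, hv])

theorem log_degreeWeight [Nontrivial V] (hT : T.Preconnected) (φ : T →g G) :
    Real.log (degreeWeight φ) = ∑ v, (1 - T.degree v : ℝ) * Real.log (G.degree (φ v)) := by
  have hφ (v : V) : (G.degree (φ v) : ℝ) ≠ 0 :=
    mod_cast (degree_map_pos φ (hT.degree_pos_of_nontrivial v)).ne'
  rw [degreeWeight, Real.log_prod fun v _ ↦ zpow_ne_zero _ (hφ v)]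
  simp only [Real.log_zpow, Int.cast_sub, Int.cast_one, Int.cast_natCast]

theorem degreeWeight_eq_degreeWeight_induce_div {v : V} [Fintype ({v}ᶜ : Set V)]
    [(T.induce {v}ᶜ).LocallyFinite] {u : ({v}ᶜ : Set V)}
    (hvu : ∀ x, T.Adj v x ↔ x = u) (φ : T →g G) :
    degreeWeight φ =
      degreeWeight (φ.comp (SimpleGraph.Embedding.induce {v}ᶜ).toHom) / G.degree (φ u) := by
  classical
  have hv : T.degree v = 1 :=
    SimpleGraph.degree_eq_one_iff_existsUnique_adj.mpr ⟨u, (hvu u).mpr rfl, fun x ↦ (hvu x).mp⟩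
  have hu : (G.degree (φ u) : ℝ) ≠ 0 :=
    mod_cast (degree_map_pos φ ((hvu u).mpr rfl).degree_pos_right).ne'
  have factor (x : ({v}ᶜ : Set V)) : (G.degree (φ x) : ℝ) ^ (1 - T.degree x : ℤ) =
      (G.degree (φ x) : ℝ) ^ (1 - (T.induce {v}ᶜ).degree x : ℤ) /
        if x = u then (G.degree (φ u) : ℝ) else 1 := by
    simp only [degree_eq_degree_induce_compl_singleton_add, T.adj_comm x, hvu, Subtype.coe_inj]
    split_ifs with hxu
    · subst hxu
      rw [Nat.cast_add, ← sub_sub, Nat.cast_one, zpow_sub_one₀ hu, div_eq_mul_inv]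
    · simp
  calc degreeWeight φ
      = ∏ x : ({v}ᶜ : Set V), (G.degree (φ x) : ℝ) ^ (1 - T.degree x : ℤ) := by
        rw [degreeWeight, Fintype.prod_eq_mul_prod_compl v, hv, Nat.cast_one, sub_self, zpow_zero,
          one_mul]
        exact Finset.prod_subtype _ (by simp) _
    _ = _ := by
        simp only [factor, Finset.prod_div_distrib, Finset.prod_ite_eq', Finset.mem_univ, if_true]
        rfl

theorem sum_degreeWeight_mul_comp_induce {v : V} [Fintype ({v}ᶜ : Set V)]
    [(T.induce {v}ᶜ).LocallyFinite] [Fintype (T →g G)] [Fintype (T.induce {v}ᶜ →g G)]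
    {u : ({v}ᶜ : Set V)} (hvu : ∀ x, T.Adj v x ↔ x = u) (F : (T.induce {v}ᶜ →g G) → ℝ) :
    ∑ φ : T →g G, degreeWeight φ * F (φ.comp (SimpleGraph.Embedding.induce {v}ᶜ).toHom) =
      ∑ ψ, degreeWeight ψ * F ψ := by
  calc ∑ φ : T →g G, degreeWeight φ * F (φ.comp (SimpleGraph.Embedding.induce {v}ᶜ).toHom)
      = ∑ p : Σ ψ : T.induce {v}ᶜ →g G, G.neighborSet (ψ u),
          degreeWeight p.1 / G.degree (p.1 u) * F p.1 :=
        Fintype.sum_equiv (homEquivSigmaNeighborSet hvu) _ _ fun φ ↦ by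
          rw [degreeWeight_eq_degreeWeight_induce_div hvu]
          rfl
    _ = ∑ ψ, ∑ _w : G.neighborSet (ψ u), degreeWeight ψ / G.degree (ψ u) * F ψ :=
        Fintype.sum_sigma _
    _ = ∑ ψ, G.degree (ψ u) * (degreeWeight ψ / G.degree (ψ u) * F ψ) := by
        simp only [Finset.sum_const, Finset.card_univ, nsmul_eq_mul,
          SimpleGraph.card_neighborSet_eq_degree]
    _ = ∑ ψ, degreeWeight ψ * F ψ := by
        refine Finset.sum_congr rfl fun ψ _ ↦ ?_
        rcases eq_or_ne (G.degree (ψ u)) 0 with h | h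
        · simp only [degreeWeight_eq_zero h, zero_div, zero_mul, mul_zero]
        · field_simp

end LocallyFinite

theorem sum_degreeWeight_mul_eval {V W : Type*} {T : SimpleGraph V} {G : SimpleGraph W}
    [Fintype V] [T.LocallyFinite] [Fintype W] [G.LocallyFinite] [Fintype (T →g G)]
    (hT : T.IsTree) (a : V) (f : W → ℝ) :
    ∑ φ : T →g G, degreeWeight φ * f (φ a) = ∑ w, G.degree w * f w := by
  classical
  rcases subsingleton_or_nontrivial V with _ | _
  · have : Unique V := uniqueOfSubsingleton a
    have weight (φ : T →g G) : degreeWeight φ = G.degree (φ a) := by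
      simp [degreeWeight, Subsingleton.elim default a]
    refine Fintype.sum_equiv (homEquivOfSubsingleton a) _ _ fun φ ↦ ?_
    rw [weight]
    rfl
  · obtain ⟨v, hva, hv⟩ : ∃ v, a ≠ v ∧ T.degree v = 1 := by
      obtain ⟨v, v', hne, hv, hv'⟩ := hT.exists_ne_and_degree_eq_one
      grind
    obtain ⟨u, huv, hu⟩ := SimpleGraph.degree_eq_one_iff_existsUnique_adj.mp hv
    have : Fintype (T.induce {v}ᶜ →g G) := Fintype.ofFinite _
    refine (sum_degreeWeight_mul_comp_induce (u := ⟨u, huv.ne'⟩)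
      (fun x ↦ ⟨hu x, fun h ↦ h ▸ huv⟩) fun ψ ↦ f (ψ ⟨a, hva⟩)).trans ?_
    exact sum_degreeWeight_mul_eval (T := T.induce {v}ᶜ)
      ⟨hT.1.induce_compl_singleton_of_degree_eq_one hv, hT.2.induce _⟩ ⟨a, hva⟩ f
termination_by Fintype.card V
decreasing_by
  classical
  exact Fintype.card_lt_of_injective_of_notMem _ Subtype.val_injective (b := v) (by simp)

theorem sum_one_sub_degree [Fintype V] [T.LocallyFinite] (hT : T.IsTree) :
    ∑ v, (1 - T.degree v : ℝ) = 2 - Fintype.card V := by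
  classical
  have edges : ((T.edgeFinset.card + 1 : ℕ) : ℝ) = Fintype.card V := congrArg _ hT.card_edgeFinset
  have degrees : ((∑ v, T.degree v : ℕ) : ℝ) = (2 * T.edgeFinset.card : ℕ) :=
    congrArg _ (by convert T.sum_degrees_eq_twice_card_edges)
  push_cast at edges degrees
  rw [Finset.sum_sub_distrib, degrees, Finset.sum_const, Finset.card_univ, nsmul_one]
  linarith

theorem sum_degreeWeight_mul_log [Nontrivial V] [Fintype V] [T.LocallyFinite] [Fintype W]
    [G.LocallyFinite] [Fintype (T →g G)] (hT : T.IsTree) :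
    ∑ φ : T →g G, degreeWeight φ * Real.log (degreeWeight φ) =
      (2 - Fintype.card V) * ∑ w, G.degree w * Real.log (G.degree w) := by
  calc ∑ φ : T →g G, degreeWeight φ * Real.log (degreeWeight φ)
      = ∑ v, (1 - T.degree v : ℝ) *
          ∑ φ : T →g G, degreeWeight φ * Real.log (G.degree (φ v)) := by
        simp only [log_degreeWeight hT.1.preconnected, Finset.mul_sum]
        rw [Finset.sum_comm]
        simp only [mul_left_comm]
    _ = (2 - Fintype.card V) * ∑ w, G.degree w * Real.log (G.degree w) := by
        simp only [sum_degreeWeight_mul_eval hT _ fun w ↦ Real.log (G.degree w), ← Finset.sum_mul,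
          sum_one_sub_degree hT]

theorem sum_degreeWeight [Fintype V] [T.LocallyFinite] [Fintype W] [G.LocallyFinite]
    [Fintype (T →g G)] (hT : T.IsTree) :
    ∑ φ : T →g G, degreeWeight φ = ∑ w, (G.degree w : ℝ) := by
  simpa only [mul_one] using sum_degreeWeight_mul_eval hT hT.1.nonempty.some fun _ ↦ (1 : ℝ)

theorem homCount_pos_of_sum_degree_pos [Finite V] [Fintype W] [G.LocallyFinite]
    (hT : T.IsTree) (hG : 0 < ∑ w, G.degree w) : 0 < homCount T G := by
  classical
  have := Fintype.ofFinite V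
  have := Fintype.ofFinite (T →g G)
  refine Nat.pos_of_ne_zero fun h ↦ hG.ne' ?_
  have : IsEmpty (T →g G) := Finite.card_eq_zero_iff.mp h
  have weights := sum_degreeWeight (G := G) hT
  rw [Fintype.sum_empty] at weights
  exact_mod_cast weights.symm

theorem log_sum_degree_div_homCount_le [Nontrivial V] [Fintype V] [Fintype W] [G.LocallyFinite]
    (hT : T.IsTree) (hG : 0 < ∑ w, G.degree w) :
    Real.log ((∑ w, G.degree w : ℝ) / homCount T G) ≤
      (2 - Fintype.card V) * Real.log ((∑ w, G.degree w : ℝ) / Fintype.card W) := by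
  classical
  have := Fintype.ofFinite (T →g G)
  have hM : (0 : ℝ) < ∑ w, (G.degree w : ℝ) := mod_cast hG
  have hV : (2 : ℝ) ≤ Fintype.card V := mod_cast Fintype.one_lt_card (α := V)
  have homs := sum_mul_log_average_le_sum_mul_log (degreeWeight_nonneg (T := T) (G := G))
  rw [sum_degreeWeight hT, sum_degreeWeight_mul_log hT, ← Nat.card_eq_fintype_card] at homs
  have vertices := sum_mul_log_average_le_sum_mul_log fun w ↦ (G.degree w).cast_nonneg (α := ℝ)
  refine le_of_mul_le_mul_left (homs.trans ?_) hM
  rw [mul_left_comm]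
  exact mul_le_mul_of_nonpos_left vertices (sub_nonpos.mpr hV)

theorem homCount_of_subsingleton [Subsingleton V] [Nonempty V] : homCount T G = Nat.card W :=
  Nat.card_congr (homEquivOfSubsingleton (Classical.arbitrary V))

theorem sum_degree_pow_le_homCount_mul_card_pow [Nontrivial V] [Fintype V] [Fintype W]
    [G.LocallyFinite] (hT : T.IsTree) :
    (∑ w, G.degree w) ^ (Fintype.card V - 1) ≤
      homCount T G * Fintype.card W ^ (Fintype.card V - 2) := by
  obtain ⟨k, hk⟩ := Nat.exists_eq_add_of_le' (Fintype.one_lt_card (α := V))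
  rw [hk]
  rcases Nat.eq_zero_or_pos (∑ w, G.degree w) with hG | hG
  · simp [hG]
  obtain ⟨w, -, -⟩ := Finset.exists_ne_zero_of_sum_ne_zero hG.ne'
  have : Nonempty W := ⟨w⟩
  have hn : (0 : ℝ) < Fintype.card W := mod_cast Fintype.card_pos
  have hM : (0 : ℝ) < ∑ w, (G.degree w : ℝ) := mod_cast hG
  have hN : (0 : ℝ) < homCount T G := mod_cast homCount_pos_of_sum_degree_pos hT hG
  have logs := log_sum_degree_div_homCount_le hT hG
  rw [Real.log_div hM.ne' hN.ne', Real.log_div hM.ne' hn.ne', hk] at logs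
  have : (∑ w, G.degree w : ℝ) ^ (k + 1) ≤ homCount T G * (Fintype.card W : ℝ) ^ k := by
    rw [← Real.log_le_log_iff (by positivity) (by positivity),
      Real.log_mul hN.ne' (by positivity), Real.log_pow, Real.log_pow]
    push_cast at logs ⊢
    linarith
  exact_mod_cast this

end Homomorphisms

/-- Sidorenko's conjecture for trees: `t(T_m, G) ≥ t(K_2, G)^(m-1)`, where
`t(H,G) = hom(H,G) / n^|V(H)|` and `t(K_2,G) = 2e/n²`. -/
theorem stmt_6 {V W : Type*} [Fintype V] [Fintype W] [DecidableEq W]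
    (T : SimpleGraph V) (hT : T.IsTree)
    (G : SimpleGraph W) [DecidableRel G.Adj] (hW : 0 < Fintype.card W) :
    (homCount T G : ℝ) / (Fintype.card W : ℝ) ^ (Fintype.card V) ≥
      ((2 * G.edgeFinset.card : ℝ) / (Fintype.card W : ℝ) ^ 2) ^ (Fintype.card V - 1) := by
  have hn : (0 : ℝ) < Fintype.card W := mod_cast hW
  rcases subsingleton_or_nontrivial V with _ | _
  · have := hT.1.nonempty
    have : Unique V := uniqueOfSubsingleton (Classical.arbitrary V)
    simp [homCount_of_subsingleton, hn.ne']
  obtain ⟨k, hk⟩ := Nat.exists_eq_add_of_le' (Fintype.one_lt_card (α := V))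
  have count : (2 * G.edgeFinset.card : ℝ) ^ (k + 1) ≤
      homCount T G * (Fintype.card W : ℝ) ^ k := by
    have := sum_degree_pow_le_homCount_mul_card_pow (G := G) hT
    rw [G.sum_degrees_eq_twice_card_edges, hk] at this
    exact_mod_cast this
  rw [ge_iff_le, hk, div_pow, div_le_div_iff₀ (by positivity) (by positivity)]
  calc (2 * G.edgeFinset.card : ℝ) ^ (k + 1) * (Fintype.card W : ℝ) ^ (k + 2)
      ≤ homCount T G * (Fintype.card W : ℝ) ^ k * (Fintype.card W : ℝ) ^ (k + 2) := by gcongr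
    _ = homCount T G * ((Fintype.card W : ℝ) ^ 2) ^ (k + 1) := by ring
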